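/- For fixed S ⪰ 0 and r ≤ p, the function on the positive orthant φ ↦ f(φ) = Σ_{i=1}^p (−log φ_i + s_{ii} φ_i) + Σ_{i=1}^r g(λ_i*(φ)), where λ_1*(φ) ≥ ⋯ ≥ λ_p*(φ) are the eigenvalues of Φ^{1/2} S Φ^{1/2} with Φ = diag(φ), can be written as f = f_1 − f_2 with f_1(φ) = Σ_i (−log φ_i + s_{ii} φ_i) convex and f_2(φ) = −Σ_{i=1}^r g(λ_i*(φ)) convex, where g(y)=log(max{1,y})−max{1,y}+1. -/

import Mathlib

/-!
Write `S = Bᴴ B`. The matrix `Φ^{1/2} S Φ^{1/2}` has the same characteristic polynomial as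
`B Φ Bᴴ`, which depends linearly on `φ`, so it suffices to prove Davis's theorem in the following
form: along a linear family of Hermitian matrices, `∑ h(λᵢ)`, summed over the indices of the largest
values of `h(λᵢ)`, is convex whenever `h` is.

By the Schur–Horn inequality this sum is the maximum, over all unitary conjugates `M` of the matrix,
of `∑ h(Mᵢᵢ)`. For a fixed conjugation the latter is convex in the matrix, and a pointwise maximum
of convex functions is convex. The function `-g` is itself convex and increasing, so the largest
values of `-g(λᵢ)` are those at the largest eigenvalues.
-/

section Rearrangement

variable {R ι : Type*} [CommRing R] [LinearOrder R] [IsStrictOrderedRing R] [Fintype ι]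
  {s : Finset ι} {c : ι → R}

lemma sum_mul_le_sum_of_sum_eq_card {w : ι → R} (hc : ∀ i ∈ s, ∀ j ∉ s, c j ≤ c i)
    (hw₀ : ∀ i, 0 ≤ w i) (hw₁ : ∀ i, w i ≤ 1) (hw : ∑ i, w i = s.card) :
    ∑ i, w i * c i ≤ ∑ i ∈ s, c i := by
  classical
  obtain rfl | hs := s.eq_empty_or_nonempty
  · have hw_zero : ∀ i, w i = 0 := by
      simpa [Finset.sum_eq_zero_iff_of_nonneg fun i _ => hw₀ i] using hw
    simp [hw_zero]
  -- Both families of weights, `w` and the indicator of `s`, have total mass `s.card`, so `c` may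
  -- be shifted by a threshold separating its values on `s` from those off `s`.
  obtain ⟨k, hk, hk_min⟩ := s.exists_min_image c hs
  have shifted : ∑ i, w i * (c i - c k) ≤ ∑ i, if i ∈ s then c i - c k else 0 := by
    refine Finset.sum_le_sum fun i _ => ?_
    split_ifs with hi
    · exact mul_le_of_le_one_left (sub_nonneg.2 (hk_min i hi)) (hw₁ i)
    · exact mul_nonpos_of_nonneg_of_nonpos (hw₀ i) (sub_nonpos.2 (hc k hk i hi))
  simp only [mul_sub, Finset.sum_sub_distrib, ← Finset.sum_mul, hw, Finset.sum_ite_mem,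
    Finset.univ_inter, Finset.sum_const, nsmul_eq_mul] at shifted
  exact (sub_le_sub_iff_right _).1 shifted

variable [DecidableEq ι] {M : Matrix ι ι R}

lemma sum_mulVec_le_sum_of_mem_doublyStochastic (hM : M ∈ doublyStochastic R ι)
    (hc : ∀ i ∈ s, ∀ j ∉ s, c j ≤ c i) :
    ∑ i ∈ s, M.mulVec c i ≤ ∑ i ∈ s, c i := by
  obtain ⟨M_nonneg, M_row, M_col⟩ := mem_doublyStochastic_iff_sum.1 hM
  calc ∑ i ∈ s, M.mulVec c i = ∑ j, (∑ i ∈ s, M i j) * c j := by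
        simp only [Matrix.mulVec, dotProduct, Finset.sum_mul]
        exact Finset.sum_comm
    _ ≤ ∑ j ∈ s, c j := by
        refine sum_mul_le_sum_of_sum_eq_card hc (fun j => Finset.sum_nonneg fun i _ => M_nonneg i j)
          (fun j => ?_) ?_
        · rw [← M_col j]
          exact Finset.sum_le_univ_sum_of_nonneg fun i => M_nonneg i j
        · rw [Finset.sum_comm]
          simp only [M_row, Finset.sum_const, nsmul_eq_mul, mul_one]

end Rearrangement

lemma sum_comp_mulVec_le_of_mem_doublyStochastic {ι : Type*} [Fintype ι] [DecidableEq ι]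
    {s : Finset ι} {M : Matrix ι ι ℝ} (hM : M ∈ doublyStochastic ℝ ι) {h : ℝ → ℝ}
    (hh : ConvexOn ℝ Set.univ h) {l : ι → ℝ} (hl : ∀ i ∈ s, ∀ j ∉ s, h (l j) ≤ h (l i)) :
    ∑ i ∈ s, h (M.mulVec l i) ≤ ∑ i ∈ s, h (l i) := by
  have jensen : ∀ i, h (M.mulVec l i) ≤ M.mulVec (h ∘ l) i := fun i =>
    hh.map_sum_le (fun j _ => nonneg_of_mem_doublyStochastic hM)
      (sum_row_of_mem_doublyStochastic hM i) fun _ _ => Set.mem_univ _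
  exact (Finset.sum_le_sum fun i _ => jensen i).trans
    (sum_mulVec_le_sum_of_mem_doublyStochastic hM hl)

section SchurHorn

open Matrix Polynomial Unitary

variable {𝕜 n : Type*} [RCLike 𝕜] [Fintype n] [DecidableEq n]

lemma sum_norm_sq_row_of_mem_unitaryGroup {U : Matrix n n 𝕜} (hU : U ∈ unitaryGroup n 𝕜) (i : n) :
    ∑ j, ‖U i j‖ ^ 2 = 1 := by
  have row_mul_star : (U * star U) i i = 1 := by rw [mem_unitaryGroup_iff.1 hU, one_apply_eq]
  simp only [mul_apply, star_apply, RCLike.star_def, RCLike.mul_conj] at row_mul_star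
  exact_mod_cast row_mul_star

lemma map_norm_sq_mem_doublyStochastic {U : Matrix n n 𝕜} (hU : U ∈ unitaryGroup n 𝕜) :
    U.map (‖·‖ ^ 2) ∈ doublyStochastic ℝ n := by
  refine mem_doublyStochastic_iff_sum.2
    ⟨fun i j => sq_nonneg _, sum_norm_sq_row_of_mem_unitaryGroup hU, fun j => ?_⟩
  simpa [star_apply] using sum_norm_sq_row_of_mem_unitaryGroup (star_mem hU) j

lemma re_conjStarAlgAut_diagonal_apply_self (U : unitaryGroup n 𝕜) (l : n → ℝ) (i : n) :
    RCLike.re (conjStarAlgAut 𝕜 _ U (diagonal fun j => (l j : 𝕜)) i i) =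
      (U.1.map (‖·‖ ^ 2)).mulVec l i := by
  have summand : ∀ j, U.1 i j * (l j : 𝕜) * star (U.1 i j) = ((‖U.1 i j‖ ^ 2 * l j : ℝ) : 𝕜) :=
    fun j => by
      rw [mul_right_comm, RCLike.star_def, RCLike.mul_conj]
      push_cast
      rfl
  rw [conjStarAlgAut_apply, mul_apply]
  simp only [mul_diagonal, star_apply, summand, map_sum, RCLike.ofReal_re]
  rfl

lemma exists_conjStarAlgAut_eq_of_charpoly_eq {A B : Matrix n n 𝕜} (hA : A.IsHermitian)
    (hB : B.IsHermitian) (hAB : A.charpoly = B.charpoly) :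
    ∃ U : unitaryGroup n 𝕜, conjStarAlgAut 𝕜 _ U A = B := by
  refine ⟨hB.eigenvectorUnitary * star hA.eigenvectorUnitary, ?_⟩
  rw [conjStarAlgAut_mul_apply, hA.conjStarAlgAut_star_eigenvectorUnitary,
    (hA.eigenvalues_eq_eigenvalues_iff hB).2 hAB, ← hB.spectral_theorem]

theorem sum_comp_re_diag_le_sum_comp_eigenvalues {s : Finset n} {A : Matrix n n 𝕜}
    (hA : A.IsHermitian) {l : n → ℝ} (hAl : A.charpoly = ∏ i, (X - C (l i : 𝕜))) {h : ℝ → ℝ}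
    (hh : ConvexOn ℝ Set.univ h) (hl : ∀ i ∈ s, ∀ j ∉ s, h (l j) ≤ h (l i)) :
    ∑ i ∈ s, h (RCLike.re (A i i)) ≤ ∑ i ∈ s, h (l i) := by
  obtain ⟨U, rfl⟩ := exists_conjStarAlgAut_eq_of_charpoly_eq
    (isHermitian_diagonal_iff.2 fun i => RCLike.conj_ofReal (l i)) hA
    ((charpoly_diagonal _).trans hAl.symm)
  simp only [re_conjStarAlgAut_diagonal_apply_self]
  exact sum_comp_mulVec_le_of_mem_doublyStochastic (map_norm_sq_mem_doublyStochastic U.2) hh hl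

lemma charpoly_conjStarAlgAut (U : unitaryGroup n 𝕜) (A : Matrix n n 𝕜) :
    (conjStarAlgAut 𝕜 _ U A).charpoly = A.charpoly := by
  rw [conjStarAlgAut_apply, charpoly_mul_comm, ← mul_assoc, coe_star_mul_self, one_mul]

end SchurHorn

lemma convexOn_of_forall_exists_convexOn_le {𝕜 E β : Type*} [Semiring 𝕜] [PartialOrder 𝕜]
    [AddCommMonoid E] [Module 𝕜 E] [AddCommMonoid β] [PartialOrder β] [IsOrderedAddMonoid β]
    [Module 𝕜 β] [PosSMulMono 𝕜 β] {D : Set E} {f : E → β} (hD : Convex 𝕜 D)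
    (hf : ∀ z ∈ D, ∃ F : E → β, ConvexOn 𝕜 D F ∧ (∀ x ∈ D, F x ≤ f x) ∧ f z ≤ F z) :
    ConvexOn 𝕜 D f := by
  refine ⟨hD, fun x hx y hy a b ha hb hab => ?_⟩
  obtain ⟨F, hF, hFf, hfF⟩ := hf _ (hD hx hy ha hb hab)
  calc f (a • x + b • y) ≤ F (a • x + b • y) := hfF
    _ ≤ a • F x + b • F y := hF.2 hx hy ha hb hab
    _ ≤ a • f x + b • f y :=
        add_le_add (smul_le_smul_of_nonneg_left (hFf x hx) ha)
          (smul_le_smul_of_nonneg_left (hFf y hy) hb)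

lemma convexOn_finset_sum {𝕜 E β ι : Type*} [Semiring 𝕜] [PartialOrder 𝕜] [AddCommMonoid E]
    [Module 𝕜 E] [AddCommMonoid β] [PartialOrder β] [IsOrderedAddMonoid β] [Module 𝕜 β]
    {s : Finset ι} {D : Set E} {f : ι → E → β} (hD : Convex 𝕜 D)
    (hf : ∀ i ∈ s, ConvexOn 𝕜 D (f i)) : ConvexOn 𝕜 D fun x => ∑ i ∈ s, f i x := by
  refine ⟨hD, fun x hx y hy a b ha hb hab => ?_⟩
  simp only [Finset.smul_sum, ← Finset.sum_add_distrib]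
  exact Finset.sum_le_sum fun i hi => (hf i hi).2 hx hy ha hb hab

open scoped ComplexOrder MatrixOrder Matrix Matrix.Norms.L2Operator in
lemma exists_eq_conjTranspose_mul_self_of_posSemidef {𝕜 n : Type*} [RCLike 𝕜] [Fintype n]
    {S : Matrix n n 𝕜} (hS : S.PosSemidef) : ∃ B : Matrix n n 𝕜, S = Bᴴ * B := by
  classical
  exact CStarAlgebra.nonneg_iff_eq_star_mul_self.1 hS.nonneg

section Davis

open Matrix Polynomial Unitary

variable {n : Type*} [Fintype n] [DecidableEq n] {s : Finset n} {h : ℝ → ℝ}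

lemma convexOn_sum_comp_re_diag_conjStarAlgAut {𝕜 : Type*} [RCLike 𝕜] (U : unitaryGroup n 𝕜)
    (hh : ConvexOn ℝ Set.univ h) :
    ConvexOn ℝ Set.univ fun A : Matrix n n 𝕜 =>
      ∑ i ∈ s, h (RCLike.re (conjStarAlgAut 𝕜 _ U A i i)) :=
  convexOn_finset_sum convex_univ fun i _ => hh.comp_linearMap <|
    RCLike.reLm ∘ₗ entryLinearMap ℝ 𝕜 i i ∘ₗ
      (conjStarAlgAut 𝕜 _ U).toAlgEquiv.toLinearMap.restrictScalars ℝ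

theorem convexOn_sum_comp_eigenvalues {𝕜 E : Type*} [RCLike 𝕜] [AddCommMonoid E] [Module ℝ E]
    {D : Set E} (hD : Convex ℝ D) (A : E →ₗ[ℝ] Matrix n n 𝕜) (hA : ∀ x ∈ D, (A x).IsHermitian)
    {l : E → n → ℝ} (hAl : ∀ x ∈ D, (A x).charpoly = ∏ i, (X - C (l x i : 𝕜)))
    (hh : ConvexOn ℝ Set.univ h) (hl : ∀ x ∈ D, ∀ i ∈ s, ∀ j ∉ s, h (l x j) ≤ h (l x i)) :
    ConvexOn ℝ D fun x => ∑ i ∈ s, h (l x i) := by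
  refine convexOn_of_forall_exists_convexOn_le hD fun z hz => ?_
  obtain ⟨U, hU⟩ := exists_conjStarAlgAut_eq_of_charpoly_eq (hA z hz)
    (isHermitian_diagonal_iff.2 fun i => RCLike.conj_ofReal (l z i))
    ((hAl z hz).trans (charpoly_diagonal _).symm)
  refine ⟨fun x => ∑ i ∈ s, h (RCLike.re (conjStarAlgAut 𝕜 _ U (A x) i i)), ?_, fun x hx => ?_, ?_⟩
  · exact ((convexOn_sum_comp_re_diag_conjStarAlgAut U hh).comp_linearMap A).subset
      (Set.subset_univ D) hD
  · exact sum_comp_re_diag_le_sum_comp_eigenvalues (A := conjStarAlgAut 𝕜 _ U (A x))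
      ((hA x hx).isSelfAdjoint.map _)
      ((charpoly_conjStarAlgAut U (A x)).trans (hAl x hx)) hh (hl x hx)
  · simp only [hU, diagonal_apply_eq, RCLike.ofReal_re, le_refl]

/-- The linear family `φ ↦ B Φ Bᴴ` with `Φ = diag(φ)`. It replaces `φ ↦ Φ^{1/2} S Φ^{1/2}`, which is
not linear but has the same eigenvalues when `S = Bᴴ B`. -/
def diagonalCongruence (B : Matrix n n ℝ) : (n → ℝ) →ₗ[ℝ] Matrix n n ℝ :=
  LinearMap.mulRight ℝ Bᴴ ∘ₗ LinearMap.mulLeft ℝ B ∘ₗ diagonalLinearMap n ℝ ℝ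

lemma diagonalCongruence_apply (B : Matrix n n ℝ) (φ : n → ℝ) :
    diagonalCongruence B φ = B * diagonal φ * Bᴴ :=
  rfl

lemma isHermitian_diagonalCongruence (B : Matrix n n ℝ) (φ : n → ℝ) :
    (diagonalCongruence B φ).IsHermitian :=
  isHermitian_mul_mul_conjTranspose B (isHermitian_diagonal φ)

lemma charpoly_diagonalCongruence (B : Matrix n n ℝ) {φ : n → ℝ} (hφ : ∀ i, 0 ≤ φ i) :
    (diagonalCongruence B φ).charpoly =
      (diagonal (fun i => √(φ i)) * (Bᴴ * B) * diagonal (fun i => √(φ i))).charpoly := by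
  have diagonal_eq_sq :
      diagonal φ = diagonal (fun i => √(φ i)) * diagonal (fun i => √(φ i)) := by
    simp only [diagonal_mul_diagonal, Real.mul_self_sqrt (hφ _)]
  calc (diagonalCongruence B φ).charpoly
      = (B * diagonal (fun i => √(φ i)) * (diagonal (fun i => √(φ i)) * Bᴴ)).charpoly := by
        simp only [diagonalCongruence_apply, diagonal_eq_sq, Matrix.mul_assoc]
    _ = (diagonal (fun i => √(φ i)) * Bᴴ * (B * diagonal (fun i => √(φ i)))).charpoly :=
        charpoly_mul_comm _ _
    _ = (diagonal (fun i => √(φ i)) * (Bᴴ * B) * diagonal (fun i => √(φ i))).charpoly := by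
        simp only [Matrix.mul_assoc]

theorem convexOn_sum_comp_eigenvalues_diagonal_sqrt {S : Matrix n n ℝ} (hS : S.PosSemidef)
    {D : Set (n → ℝ)} (hD : Convex ℝ D) (hD_nonneg : ∀ φ ∈ D, ∀ i, 0 ≤ φ i)
    {l : (n → ℝ) → n → ℝ}
    (hSl : ∀ φ ∈ D,
      (diagonal (fun i => √(φ i)) * S * diagonal (fun i => √(φ i))).charpoly =
        ∏ i, (X - C (l φ i)))
    (hh : ConvexOn ℝ Set.univ h) (hl : ∀ φ ∈ D, ∀ i ∈ s, ∀ j ∉ s, h (l φ j) ≤ h (l φ i)) :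
    ConvexOn ℝ D fun φ => ∑ i ∈ s, h (l φ i) := by
  obtain ⟨B, rfl⟩ := exists_eq_conjTranspose_mul_self_of_posSemidef hS
  exact convexOn_sum_comp_eigenvalues hD (diagonalCongruence B)
    (fun φ _ => isHermitian_diagonalCongruence B φ)
    (fun φ hφ => (charpoly_diagonalCongruence B (hD_nonneg φ hφ)).trans (hSl φ hφ)) hh hl

end Davis

lemma antitoneOn_log_sub_self : AntitoneOn (fun x => Real.log x - x) (Set.Ici 1) := by
  intro x hx y _ hxy
  have hx₀ : 0 < x := zero_lt_one.trans_le hx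
  have log_quotient : Real.log y - Real.log x ≤ y / x - 1 := by
    rw [← Real.log_div (hx₀.trans_le hxy).ne' hx₀.ne']
    exact Real.log_le_sub_one_of_pos (div_pos (hx₀.trans_le hxy) hx₀)
  have quotient_le : y / x - 1 ≤ y - x := by
    rw [div_sub_one hx₀.ne']
    exact div_le_self (sub_nonneg.2 hxy) hx
  linarith

/-- The nonincreasing concave function `g` of the objective; Davis's theorem is applied to `-g`. -/
noncomputable def clippedLogGap (y : ℝ) : ℝ :=
  Real.log (max 1 y) - max 1 y + 1

lemma antitone_clippedLogGap : Antitone clippedLogGap := fun x y hxy =>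
  add_le_add_left (antitoneOn_log_sub_self (Set.mem_Ici.2 (le_max_left 1 x))
    (Set.mem_Ici.2 (le_max_left 1 y)) (max_le_max_left 1 hxy)) 1

lemma concaveOn_clippedLogGap : ConcaveOn ℝ Set.univ clippedLogGap := by
  have clip_convex : ConvexOn ℝ Set.univ fun y : ℝ => max 1 y :=
    (convexOn_const 1 convex_univ).sup (convexOn_id convex_univ)
  have clip_range : (fun y : ℝ => max 1 y) '' Set.univ = Set.Ici 1 := by
    ext x
    exact ⟨fun ⟨y, _, hy⟩ => hy ▸ le_max_left 1 y, fun hx => ⟨x, Set.mem_univ x, max_eq_right hx⟩⟩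
  have log_sub_concave : ConcaveOn ℝ (Set.Ici 1) fun x => Real.log x - x :=
    (strictConcaveOn_log_Ioi.concaveOn.subset (fun x hx => zero_lt_one.trans_le hx)
      (convex_Ici 1)).sub (convexOn_id (convex_Ici 1))
  exact (ConcaveOn.comp_convexOn (clip_range ▸ log_sub_concave) clip_convex
    (clip_range ▸ antitoneOn_log_sub_self)).add_const 1

section Orthant

variable {ι : Type*}

lemma convex_setOf_forall_pos : Convex ℝ {φ : ι → ℝ | ∀ i, 0 < φ i} := by
  simpa only [Set.pi, Set.mem_univ, true_imp_iff, Set.mem_Ioi] using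
    convex_pi (s := Set.univ) fun (_ : ι) _ => convex_Ioi (0 : ℝ)

lemma convexOn_sum_neg_log_add_mul [Fintype ι] (c : ι → ℝ) :
    ConvexOn ℝ {φ : ι → ℝ | ∀ i, 0 < φ i} fun φ => ∑ i, (-Real.log (φ i) + c i * φ i) := by
  refine convexOn_finset_sum convex_setOf_forall_pos fun i _ => ?_
  have summand_convex : ConvexOn ℝ (Set.Ioi 0) fun x => -Real.log x + c i * x :=
    strictConcaveOn_log_Ioi.concaveOn.neg.add
      ((LinearMap.mulLeft ℝ (c i)).convexOn (convex_Ioi 0))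
  have coord_convex := summand_convex.comp_linearMap (LinearMap.proj (φ := fun _ : ι => ℝ) i)
  exact coord_convex.subset (fun φ hφ => hφ i) convex_setOf_forall_pos

end Orthant

open Polynomial in
theorem f_is_dc (p r : ℕ) (hr : r ≤ p)
    (S : Matrix (Fin p) (Fin p) ℝ) (hS : S.PosSemidef)
    (hdiag : ∀ i, 0 < S i i)
    (lam : (Fin p → ℝ) → Fin p → ℝ)
    -- `lam φ` lists the eigenvalues of `Φ^{1/2} S Φ^{1/2}` in decreasing order
    (hlam : ∀ φ : Fin p → ℝ, (∀ i, 0 < φ i) →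
      (∀ i j : Fin p, i ≤ j → lam φ j ≤ lam φ i) ∧
      (Matrix.diagonal (fun i => Real.sqrt (φ i)) * S *
        Matrix.diagonal (fun i => Real.sqrt (φ i))).charpoly =
        ∏ i, (X - C (lam φ i))) :
    (∀ φ : Fin p → ℝ, (∀ i, 0 < φ i) →
      ((∑ i, (-Real.log (φ i) + S i i * φ i)) +
        ∑ i ∈ Finset.univ.filter (fun i : Fin p => (i : ℕ) < r),
          (Real.log (max 1 (lam φ i)) - max 1 (lam φ i) + 1))
      = (∑ i, (-Real.log (φ i) + S i i * φ i)) -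
          (- ∑ i ∈ Finset.univ.filter (fun i : Fin p => (i : ℕ) < r),
            (Real.log (max 1 (lam φ i)) - max 1 (lam φ i) + 1))) ∧
    ConvexOn ℝ {φ : Fin p → ℝ | ∀ i, 0 < φ i}
      (fun φ => ∑ i, (-Real.log (φ i) + S i i * φ i)) ∧
    ConvexOn ℝ {φ : Fin p → ℝ | ∀ i, 0 < φ i}
      (fun φ => - ∑ i ∈ Finset.univ.filter (fun i : Fin p => (i : ℕ) < r),
        (Real.log (max 1 (lam φ i)) - max 1 (lam φ i) + 1)) := by
  refine ⟨fun φ _ => (sub_neg_eq_add _ _).symm, convexOn_sum_neg_log_add_mul fun i => S i i, ?_⟩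
  simp only [← Finset.sum_neg_distrib]
  refine convexOn_sum_comp_eigenvalues_diagonal_sqrt (h := -clippedLogGap) (l := lam) hS
    convex_setOf_forall_pos (fun φ hφ i => (hφ i).le) (fun φ hφ => (hlam φ hφ).2)
    concaveOn_clippedLogGap.neg fun φ hφ i hi j hj =>
      neg_le_neg (antitone_clippedLogGap ((hlam φ hφ).1 i j ?_))
  have hir : (i : ℕ) < r := (Finset.mem_filter.1 hi).2
  have hrj : r ≤ j := not_lt.1 fun hjr => hj (Finset.mem_filter.2 ⟨Finset.mem_univ j, hjr⟩)
  exact Fin.le_def.2 (hir.le.trans hrj)
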